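/- In the local public good game, let (x*, y*, g*) be a Nash equilibrium in which some player i has x*_i > k. Then the closure ḡ* of the equilibrium network is either empty or has a unique non-singleton component (i.e. all non-isolated players lie in one component). Moreover, if in addition there exists a player j ≠ i with isolation provision x_j^I > k, then under Assumption 1 the equilibrium network g* is non-empty. -/

import Mathlib

open Finset Function

noncomputable section

/-- A directed network on `n` players: `g i j = true` iff `i` sponsors a link to `j`. -/
abbrev Net (n : ℕ) := Fin n → Fin n → Bool

/-- The number of links sponsored by player `i`. -/
def deg {n : ℕ} (g : Net n) (i : Fin n) : ℕ :=
  (Finset.univ.filter fun j => g i j = true).card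

/-- Spillovers received by player `i`: the provision of the players she links to. -/
def spill {n : ℕ} (x : Fin n → ℝ) (g : Net n) (i : Fin n) : ℝ :=
  ∑ j, if g i j = true then x j else 0

/-- Public good consumption of player `i`: own provision plus spillovers. -/
def cons {n : ℕ} (x : Fin n → ℝ) (g : Net n) (i : Fin n) : ℝ :=
  x i + spill x g i

/-- The primitives of the local public good game: prices of the private good, wealths,
linking cost, utilities and induced Engel curves. -/
structure Game (n : ℕ) where
  p : Fin n → ℝ
  w : Fin n → ℝ
  k : ℝ
  U : Fin n → ℝ → ℝ → ℝ
  γ : Fin n → ℝ → ℝ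
  p_pos : ∀ i, 0 < p i
  w_pos : ∀ i, 0 < w i
  k_nonneg : 0 ≤ k
  U_smooth : ∀ i, ContDiff ℝ 2 fun q : ℝ × ℝ => U i q.1 q.2
  U_sconcave : ∀ i, StrictConcaveOn ℝ Set.univ fun q : ℝ × ℝ => U i q.1 q.2
  U_mono_x : ∀ i b, StrictMono fun a => U i a b
  U_mono_y : ∀ i a, StrictMono fun b => U i a b

/-- Net social income of player `i`. -/
def netInc {n : ℕ} (G : Game n) (x : Fin n → ℝ) (g : Net n) (i : Fin n) : ℝ :=
  G.w i - (deg g i : ℝ) * G.k + spill x g i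

/-- Assumption 1 (normality): each Engel curve is continuously differentiable with
derivative in `[0,1]`. -/
def NormalGame {n : ℕ} (G : Game n) : Prop :=
  ∀ i, ContDiff ℝ 1 (G.γ i) ∧ ∀ t : ℝ, deriv (G.γ i) t ∈ Set.Icc (0 : ℝ) 1

/-- `G.γ i` is the demand (Engel curve) induced by `U i`: on the budget line with
income `m`, and under the constraint that public good consumption is at least the
spillovers `s`, the optimal public good consumption is `max (γ i m) s`. -/
def EngelCompatible {n : ℕ} (G : Game n) : Prop :=
  ∀ (i : Fin n) (m s xb yb : ℝ), 0 ≤ s → s ≤ xb → 0 ≤ yb → xb + G.p i * yb = m →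
    (∀ xb' yb' : ℝ, s ≤ xb' → 0 ≤ yb' → xb' + G.p i * yb' = m →
      G.U i xb' yb' ≤ G.U i xb yb) →
    xb = max (G.γ i m) s

/-- Budget feasibility of player `i`'s strategy. -/
def Feasible {n : ℕ} (G : Game n) (x y : Fin n → ℝ) (g : Net n) (i : Fin n) : Prop :=
  0 ≤ x i ∧ 0 ≤ y i ∧ g i i = false ∧
    x i + G.p i * y i + (deg g i : ℝ) * G.k = G.w i

/-- Player `i`'s payoff. -/
def payoff {n : ℕ} (G : Game n) (x y : Fin n → ℝ) (g : Net n) (i : Fin n) : ℝ :=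
  G.U i (cons x g i) (y i)

/-- Replace row `i` of the network `g` by `r` (a unilateral linking deviation). -/
def updRow {n : ℕ} (g : Net n) (i : Fin n) (r : Fin n → Bool) : Net n :=
  fun a b => if a = i then r b else g a b

/-- Nash equilibrium: every player's strategy is feasible and no feasible unilateral
deviation (in provision, private consumption and links) improves her payoff. -/
def Nash {n : ℕ} (G : Game n) (x y : Fin n → ℝ) (g : Net n) : Prop :=
  (∀ i, Feasible G x y g i) ∧
  ∀ (i : Fin n) (xi yi : ℝ) (r : Fin n → Bool),
    Feasible G (Function.update x i xi) (Function.update y i yi) (updRow g i r) i →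
    payoff G (Function.update x i xi) (Function.update y i yi) (updRow g i r) i ≤
      payoff G x y g i

/-- Sociable Nash equilibrium: a Nash equilibrium in which any payoff-equivalent
deviation only uses links already established in equilibrium (players indifferent
about a link establish it). -/
def Sociable {n : ℕ} (G : Game n) (x y : Fin n → ℝ) (g : Net n) : Prop :=
  Nash G x y g ∧
  ∀ (i : Fin n) (xi yi : ℝ) (r : Fin n → Bool),
    Feasible G (Function.update x i xi) (Function.update y i yi) (updRow g i r) i →
    payoff G (Function.update x i xi) (Function.update y i yi) (updRow g i r) i =
      payoff G x y g i →
    ∀ j, r j = true → g i j = true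

/-- Strict Nash equilibrium: any feasible unilateral deviation that differs from the
equilibrium strategy strictly reduces the deviator's payoff. -/
def StrictNash {n : ℕ} (G : Game n) (x y : Fin n → ℝ) (g : Net n) : Prop :=
  (∀ i, Feasible G x y g i) ∧
  ∀ (i : Fin n) (xi yi : ℝ) (r : Fin n → Bool),
    Feasible G (Function.update x i xi) (Function.update y i yi) (updRow g i r) i →
    (xi ≠ x i ∨ yi ≠ y i ∨ r ≠ g i) →
    payoff G (Function.update x i xi) (Function.update y i yi) (updRow g i r) i <
      payoff G x y g i

/-- `(xi, yi)` is an optimal bundle for player `i` in isolation (no links). -/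
def IsoOpt {n : ℕ} (G : Game n) (i : Fin n) (xi yi : ℝ) : Prop :=
  0 ≤ xi ∧ 0 ≤ yi ∧ xi + G.p i * yi = G.w i ∧
    ∀ xi' yi' : ℝ, 0 ≤ xi' → 0 ≤ yi' → xi' + G.p i * yi' = G.w i →
      G.U i xi' yi' ≤ G.U i xi yi

/-- `g` is a core-periphery graph with core `C`: core players are mutually linked
(with reciprocated links), periphery players have no links among themselves, and
every non-isolated periphery player links to some core player. -/
def IsCorePeriphery {n : ℕ} (g : Net n) (C : Finset (Fin n)) : Prop :=
  (∀ i ∈ C, ∀ j ∈ C, i ≠ j → g i j = true ∧ g j i = true) ∧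
  (∀ i ∉ C, ∀ j ∉ C, g i j = false) ∧
  (∀ i ∉ C, (∃ j, g i j = true ∨ g j i = true) → ∃ l ∈ C, g i l = true)

/-- `g` is a nested split graph with core `C`: a core-periphery graph in which the
neighborhoods of periphery players are nested. -/
def IsNestedSplit {n : ℕ} (g : Net n) (C : Finset (Fin n)) : Prop :=
  IsCorePeriphery g C ∧
  ∀ i ∉ C, ∀ j ∉ C, deg g j ≤ deg g i → ∀ l, g j l = true → g i l = true

/-- The core of an equilibrium: the players contributing strictly more than the
linking cost. -/
def coreOf {n : ℕ} (G : Game n) (x : Fin n → ℝ) : Finset (Fin n) :=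
  Finset.univ.filter fun i => G.k < x i

/-- Adjacency in the closure of `g`. -/
def adjBar {n : ℕ} (g : Net n) (i j : Fin n) : Prop :=
  g i j = true ∨ g j i = true

/-- All players' consumption choices are optimal given the (fixed) network. -/
def ConsOpt {n : ℕ} (G : Game n) (x y : Fin n → ℝ) (g : Net n) : Prop :=
  ∀ i, Feasible G x y g i ∧
    ∀ xi yi : ℝ,
      Feasible G (Function.update x i xi) (Function.update y i yi) g i →
      payoff G (Function.update x i xi) (Function.update y i yi) g i ≤ payoff G x y g i

/-- Assumption 2: identical preferences and identical price of the private good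
(hence identical Engel curves). -/
def Homogeneous {n : ℕ} (G : Game n) : Prop :=
  ∀ i j, G.U i = G.U j ∧ G.p i = G.p j ∧ G.γ i = G.γ j

/-- Social welfare: the sum of individual payoffs. -/
def welfare {n : ℕ} (G : Game n) (x y : Fin n → ℝ) (g : Net n) : ℝ :=
  ∑ i, G.U i (cons x g i) (y i)

/-- Aggregate feasibility for the social planner: total provision, total private
consumption and total linking costs are financed by total wealth. -/
def FeasAgg {n : ℕ} (G : Game n) (x y : Fin n → ℝ) (g : Net n) : Prop :=
  (∀ i, 0 ≤ x i) ∧ (∀ i, 0 ≤ y i) ∧ (∀ i, g i i = false) ∧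
    ∑ i, x i + ∑ i, G.p i * y i + (∑ i, (deg g i : ℝ)) * G.k ≤ ∑ i, G.w i

/-- Efficient (welfare-maximizing) configuration. -/
def Efficient {n : ℕ} (G : Game n) (x y : Fin n → ℝ) (g : Net n) : Prop :=
  FeasAgg G x y g ∧
  ∀ (x' y' : Fin n → ℝ) (g' : Net n), FeasAgg G x' y' g' →
    welfare G x' y' g' ≤ welfare G x y g

/-- The same game with a different linking cost. -/
def Game.withCost {n : ℕ} (G : Game n) (k' : ℝ) (h : 0 ≤ k') : Game n :=
  { G with k := k', k_nonneg := h }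

/-- The same game with a different wealth distribution. -/
def Game.withWealth {n : ℕ} (G : Game n) (w' : Fin n → ℝ) (h : ∀ i, 0 < w' i) : Game n :=
  { G with w := w', w_pos := h }

/-- Budget feasibility with personalized public good prices `ρ` and lump-sum taxes `τ`. -/
def FeasibleT {n : ℕ} (G : Game n) (ρ τ : Fin n → ℝ) (x y : Fin n → ℝ) (g : Net n)
    (i : Fin n) : Prop :=
  0 ≤ x i ∧ 0 ≤ y i ∧ g i i = false ∧
    ρ i * x i + G.p i * y i + (deg g i : ℝ) * G.k = G.w i - τ i

/-- Nash equilibrium under personalized public good prices `ρ` and lump-sum taxes `τ`. -/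
def NashT {n : ℕ} (G : Game n) (ρ τ : Fin n → ℝ) (x y : Fin n → ℝ) (g : Net n) : Prop :=
  (∀ i, FeasibleT G ρ τ x y g i) ∧
  ∀ (i : Fin n) (xi yi : ℝ) (r : Fin n → Bool),
    FeasibleT G ρ τ (Function.update x i xi) (Function.update y i yi) (updRow g i r) i →
    payoff G (Function.update x i xi) (Function.update y i yi) (updRow g i r) i ≤
      payoff G x y g i

/-- No deviation to provision `xi`, private consumption `yi` and links `r` is profitable,
with spillovers expressed through the equilibrium provision of the others. -/
theorem Nash.utility_le {n : ℕ} {G : Game n} {x y : Fin n → ℝ} {g : Net n}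
    (h : Nash G x y g) (a : Fin n) (xi yi : ℝ) (r : Fin n → Bool) (hxi : 0 ≤ xi)
    (hyi : 0 ≤ yi) (hr : r a = false)
    (hw : xi + G.p a * yi + ((Finset.univ.filter fun j => r j = true).card : ℝ) * G.k = G.w a) :
    G.U a (xi + ∑ j, if r j = true then x j else 0) yi ≤ G.U a (cons x g a) (y a) := by
  have hspill : spill (Function.update x a xi) (updRow g a r) a
      = ∑ j, if r j = true then x j else 0 := by
    refine Finset.sum_congr rfl fun j _ => ?_
    by_cases hj : j = a
    · subst hj
      simp [updRow, hr]
    · simp [updRow, Function.update_of_ne hj]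
  have hdev := h.2 a xi yi r
  simp only [Feasible, payoff, _root_.cons, hspill, Function.update_self] at hdev ⊢
  refine hdev ⟨hxi, hyi, ?_, ?_⟩
  · simp [updRow, hr]
  · simpa [deg, updRow] using hw

/-- Adding a link raises spillovers by the provision of the new neighbor. -/
theorem sum_update_true {n : ℕ} (x : Fin n → ℝ) (r : Fin n → Bool) (b : Fin n)
    (hb : r b = false) :
    (∑ j, if Function.update r b true j = true then x j else 0)
      = (∑ j, if r j = true then x j else 0) + x b := by
  rw [← Finset.add_sum_erase _ _ (Finset.mem_univ b),
    ← Finset.add_sum_erase (Finset.univ) (fun j => if r j = true then x j else 0)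
      (Finset.mem_univ b)]
  have hrest : (∑ j ∈ Finset.univ.erase b, if Function.update r b true j = true then x j else 0)
      = ∑ j ∈ Finset.univ.erase b, if r j = true then x j else 0 :=
    Finset.sum_congr rfl fun j hj => by
      rw [Function.update_of_ne (Finset.ne_of_mem_erase hj)]
  rw [hrest]
  simp [hb, add_comm]

/-- Adding a link raises the number of links by one. -/
theorem card_update_true {n : ℕ} (r : Fin n → Bool) (b : Fin n) (hb : r b = false) :
    ((Finset.univ.filter fun j => Function.update r b true j = true).card : ℝ)
      = (Finset.univ.filter fun j => r j = true).card + 1 := by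
  have h := sum_update_true (fun _ => 1) r b hb
  simpa only [Finset.sum_boole] using h

/-- In equilibrium, players contributing more than the linking cost link to each other. -/
theorem Nash.link_of_lt {n : ℕ} {G : Game n} {x y : Fin n → ℝ} {g : Net n}
    (h : Nash G x y g) {i b : Fin n} (hi : G.k < x i) (hb : G.k < x b) (hne : b ≠ i) :
    g i b = true := by
  by_contra hg
  rw [Bool.not_eq_true] at hg
  obtain ⟨-, hy, hii, hw⟩ := h.1 i
  have hle := h.utility_le i (x i - G.k) (y i) (Function.update (g i) b true) (by linarith) hy
    (by rw [Function.update_of_ne hne.symm, hii])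
    (by rw [card_update_true _ _ hg]; simp only [deg] at hw; linarith)
  rw [sum_update_true _ _ _ hg] at hle
  have := (G.U_mono_x i (y i)).le_iff_le.mp hle
  simp only [_root_.cons, spill] at this
  linarith

/-- In equilibrium, a player with a link to `b` also links to anyone contributing more
than `b`. -/
theorem Nash.link_of_link_of_lt {n : ℕ} {G : Game n} {x y : Fin n → ℝ} {g : Net n}
    (h : Nash G x y g) {a b i : Fin n} (hab : g a b = true) (hlt : x b < x i) (hne : a ≠ i) :
    g a i = true := by
  by_contra hg
  rw [Bool.not_eq_true] at hg
  obtain ⟨hx, hy, haa, hw⟩ := h.1 a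
  have hib : i ≠ b := by rintro rfl; simp [hab] at hg
  have hab' : a ≠ b := by rintro rfl; simp [hab] at haa
  set r := Function.update (g a) b false with hr
  have hrb : r b = false := by simp [hr]
  have hri : r i = false := by rw [hr, Function.update_of_ne hib, hg]
  have hrg : Function.update r b true = g a := by
    rw [hr, Function.update_idem, ← hab, Function.update_eq_self]
  have hsum := sum_update_true x r b hrb
  have hcard := card_update_true r b hrb
  rw [hrg] at hsum hcard
  have hle := h.utility_le a (x a) (y a) (Function.update r i true) hx hy
    (by rw [Function.update_of_ne hne, hr, Function.update_of_ne hab', haa])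
    (by rw [card_update_true _ _ hri, ← hcard]; exact hw)
  rw [sum_update_true _ _ _ hri] at hle
  have := (G.U_mono_x a (y a)).le_iff_le.mp hle
  simp only [_root_.cons, spill] at this
  linarith

/-- In equilibrium, both ends of any link are connected to each player contributing more
than the linking cost. -/
theorem Nash.reflTransGen_of_link {n : ℕ} {G : Game n} {x y : Fin n → ℝ} {g : Net n}
    (h : Nash G x y g) {i a b : Fin n} (hi : G.k < x i) (hab : g a b = true) :
    Relation.ReflTransGen (adjBar g) a i ∧ Relation.ReflTransGen (adjBar g) b i := by
  have hAB : adjBar g a b := Or.inl hab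
  have hBA : adjBar g b a := Or.inr hab
  rcases lt_or_ge G.k (x b) with hb | hb
  · have hbi : Relation.ReflTransGen (adjBar g) b i := by
      by_cases hne : b = i
      · rw [hne]
      · exact .single (Or.inr (h.link_of_lt hi hb hne))
    exact ⟨.head hAB hbi, hbi⟩
  · have hai : Relation.ReflTransGen (adjBar g) a i := by
      by_cases hne : a = i
      · rw [hne]
      · exact .single (Or.inl (h.link_of_link_of_lt hab (hb.trans_lt hi) hne))
    exact ⟨hai, .head hBA hai⟩

/-- In an equilibrium with an empty network, everyone chooses an optimal bundle in
isolation. -/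
theorem Nash.isoOpt_of_empty {n : ℕ} {G : Game n} {x y : Fin n → ℝ} {g : Net n}
    (h : Nash G x y g) (hg : ∀ a b, g a b = false) (j : Fin n) : IsoOpt G j (x j) (y j) := by
  obtain ⟨hx, hy, -, hw⟩ := h.1 j
  refine ⟨hx, hy, by simpa [deg, hg] using hw, fun xi yi hxi hyi hwi => ?_⟩
  simpa [_root_.cons, spill, hg] using
    h.utility_le j xi yi (fun _ => false) hxi hyi rfl (by simpa using hwi)

/-- Under an induced Engel curve, provision in isolation is determined by wealth. -/
theorem IsoOpt.eq_max {n : ℕ} {G : Game n} {j : Fin n} {xi yi : ℝ} (h : IsoOpt G j xi yi)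
    (hE : EngelCompatible G) : xi = max (G.γ j (G.w j)) 0 :=
  hE j (G.w j) 0 xi yi le_rfl h.1 h.2.1 h.2.2.1 h.2.2.2

/-- In a Nash equilibrium with some player contributing more than `k`,
the closure of the network is empty or all non-isolated players lie in one component;
if moreover some other player's isolation provision exceeds `k`, then under
Assumption 1 the equilibrium network is non-empty. -/
theorem unique_component {n : ℕ} (G : Game n) (hk : 0 < G.k)
    (x y : Fin n → ℝ) (g : Net n) (hNE : Nash G x y g)
    (i : Fin n) (hi : G.k < x i) :
    ((∀ a b, g a b = false) ∨
      ∀ a b : Fin n, (∃ c, adjBar g a c) → (∃ c, adjBar g b c) →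
        Relation.ReflTransGen (adjBar g) a b) ∧
    (NormalGame G → EngelCompatible G →
      ∀ xI yI : Fin n → ℝ, (∀ l, IsoOpt G l (xI l) (yI l)) →
        (∃ j, j ≠ i ∧ G.k < xI j) → ∃ a b, g a b = true) := by
  have hconn : ∀ a, (∃ c, adjBar g a c) → Relation.ReflTransGen (adjBar g) a i := by
    rintro a ⟨c, hac | hca⟩
    · exact (hNE.reflTransGen_of_link hi hac).1
    · exact (hNE.reflTransGen_of_link hi hca).2
  have hsymm : Std.Symm (adjBar g) := ⟨fun _ _ => Or.symm⟩
  refine ⟨Or.inr fun a b ha hb => (hconn a ha).trans (symm (hconn b hb)), ?_⟩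
  rintro - hE xI yI hI ⟨j, hji, hj⟩
  by_contra! hempty
  have hg : ∀ a b, g a b = false := fun a b => Bool.eq_false_iff.mpr (hempty a b)
  have hxj : x j = xI j :=
    ((hNE.isoOpt_of_empty hg j).eq_max hE).trans ((hI j).eq_max hE).symm
  exact hempty i j (hNE.link_of_lt hi (hxj ▸ hj) hji)
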